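/- Let n ∈ ω, let ⪯ be a total order on {1,...,n-1}, and let E be a Borel equivalence relation on [2^ω]^n_⪯. Then there exists a perfect subset P of 2^ω and a Borel map c : [P]^n_⪯ → 2^ω such that for all X, Y ∈ [P]^n_⪯, X E Y if and only if c(X) = c(Y); that is, E is smooth on [P]^n_⪯. -/

import Mathlib

/-!
The theorem needs no partition calculus: it is enough to find a perfect `P` on which `E` is
*relatively closed* in `[P]^n_⪯ × [P]^n_⪯`, because `[P]^n_⪯` is a relatively open subset of the
compact space `P^n` and closed equivalence relations on such spaces are smooth
(`smooth_of_closed`).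

The set `P` is given by Mycielski's theorem (`mycielski`): for a comeager set `C` of finite tuples
there is a perfect set all of whose injective tuples lie in `C`. A pair of `n`-tuples is presented
as a single injective `2n`-tuple `z` together with a pattern `τ`, the pair being
`(z ∘ inl, z ∘ τ)`. For each pattern `τ`, the relation `E` is a Borel set of `2n`-tuples, hence
agrees on a comeager set with an open set `U τ` whose boundary may be avoided as well. Thus `E` is
relatively clopen on pairs from `P` realizing any one pattern, and closedness can only fail at a
non-equivalent pair `(X, Y)` approached by equivalent pairs `(X', Y')` having fewer coincidences.

Let `K` be the set of coordinates at which a coincidence of `(X, Y)` is broken in `(X', Y')`.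
Moving only the coordinates in `K` of `Y'` keeps it equivalent to `X'`, so near `Y'` the relation
does not depend on the coordinates in `K` (`shift_movable`). The set `W K` of tuples with this
property is open, and its boundary is also avoided by tuples from `P`, so it contains the
limit `Y`. Hence the coordinates of `Y'` in `K` may be moved onto the matching coordinates of `X'`
without leaving the class; the new pair has the pattern of `(X, Y)` and is close to it, so it is not
equivalent, a contradiction (`exists_perfect_closed`).
-/

open Set

/-- The Cantor space `2^ω`. -/
abbrev Cantor : Type := ℕ → Bool

/-- The first coordinate where `x` and `y` differ (`0` if `x = y`). -/
noncomputable def splitLevel (x y : Cantor) : ℕ :=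
  letI := Classical.dec (x = y)
  if h : x = y then 0 else Nat.find (Function.ne_iff.mp h)

/-- The metric `d(x,y) = 1/(k+1)`, `k = min{m : x m ≠ y m}`. -/
noncomputable def cdist (x y : Cantor) : ℝ := 1 / (splitLevel x y + 1)

/-- The lexicographic order on `2^ω` induced by `0 < 1`. -/
def clex (x y : Cantor) : Prop := x ≠ y ∧ x (splitLevel x y) = false

/-- The initial segment `x ↾ k` as an element of `2^{<ω}`. -/
def restr (x : Cantor) (k : ℕ) : List Bool := (List.range k).map x

/-- The longest common initial segment `x ∩ y`. -/
noncomputable def meet (x y : Cantor) : List Bool := restr x (splitLevel x y)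

/-- A perfect subset of `2^ω`: nonempty, closed, with no isolated points. -/
def PerfectSet (P : Set Cantor) : Prop := Perfect P ∧ P.Nonempty

/-- A skew subset of `2^ω`. -/
def Skew (P : Set Cantor) : Prop :=
  ∀ x₀ ∈ P, ∀ x₁ ∈ P, ∀ y₀ ∈ P, ∀ y₁ ∈ P, x₀ ≠ x₁ → y₀ ≠ y₁ →
    cdist x₀ x₁ = cdist y₀ y₁ → meet x₀ x₁ = meet y₀ y₁

/-- Index `i - 1` of the `i`-th gap (for `i ∈ {1,…,n-1}`, reindexed by `Fin (n-1)`). -/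
def gapIdx {n : ℕ} (i : Fin (n - 1)) : Fin n := ⟨i.1, by have := i.2; omega⟩

/-- Index `i` of the `i`-th gap. -/
def gapIdx' {n : ℕ} (i : Fin (n - 1)) : Fin n := ⟨i.1 + 1, by have := i.2; omega⟩

/-- `|x_{i-1} ∩ x_i|` for the `i`-th gap of the tuple `X`. -/
noncomputable def gapLen {n : ℕ} (X : Fin n → Cantor) (i : Fin (n - 1)) : ℕ :=
  splitLevel (X (gapIdx i)) (X (gapIdx' i))

/-- `x_{i-1} ∩ x_i` for the `i`-th gap of the tuple `X`. -/
noncomputable def gapMeet {n : ℕ} (X : Fin n → Cantor) (i : Fin (n - 1)) : List Bool :=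
  meet (X (gapIdx i)) (X (gapIdx' i))

/-- `[T]^n` : lexicographically increasing `n`-tuples of elements of `T`. -/
def Tuples (n : ℕ) (T : Set Cantor) : Set (Fin n → Cantor) :=
  {X | (∀ i, X i ∈ T) ∧ ∀ i j : Fin n, i < j → clex (X i) (X j)}

/-- `[T]^n_⪯` : members of `[T]^n` whose gap distances realize the total order `⪯`
(on `{1,…,n-1}`, reindexed by `Fin (n-1)`):
`d(x_{i-1},x_i) > d(x_{j-1},x_j)` iff `i ⪯ j`, for `i ≠ j`. -/
def OrdTuples (n : ℕ) (prec : Fin (n - 1) → Fin (n - 1) → Prop) (T : Set Cantor) :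
    Set (Fin n → Cantor) :=
  {X | X ∈ Tuples n T ∧ ∀ i j : Fin (n - 1), i ≠ j →
      (cdist (X (gapIdx i)) (X (gapIdx' i)) > cdist (X (gapIdx j)) (X (gapIdx' j)) ↔ prec i j)}

/-- `D(X) = {x_{i-1} ∩ x_i : i ∈ {1,…,n-1}}`. -/
def Dset (n : ℕ) (X : Fin n → Cantor) : Set (List Bool) :=
  {t | ∃ i : Fin (n - 1), t = gapMeet X i}

/-- `D̂(X) = D(X) ∪ {x_i ↾ |x_{j-1} ∩ x_j| : i ≠ j}`. -/
def Dhat (n : ℕ) (X : Fin n → Cantor) : Set (List Bool) :=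
  Dset n X ∪ {t | ∃ (i : Fin n) (j : Fin (n - 1)), (i : ℕ) ≠ (j : ℕ) + 1 ∧
    t = restr (X i) (gapLen X j)}

/-- The abstract index set for the nodes of `D̂(X)`; it serves as the fixed
representative `C^n_⪯` of the isomorphism class of the trees `D̂(X)`,
`X ∈ [2^ω]^n_⪯`, the isomorphism `g_X : D̂(X) → C^n_⪯` being the indexing. -/
abbrev CIdx (n : ℕ) : Type := Fin (n - 1) ⊕ Fin n × Fin (n - 1)

/-- The node of `D̂(X)` indexed by a given element of `C^n_⪯`: `inl j` indexes
`x_{j-1} ∩ x_j` and `inr (i, j)` indexes `x_i ↾ |x_{j-1} ∩ x_j|`. -/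
noncomputable def nodeOf {n : ℕ} (X : Fin n → Cantor) : CIdx n → List Bool
  | .inl j => gapMeet X j
  | .inr (i, j) => restr (X i) (gapLen X j)

/-- `D̂(X):J = {x ↾ k : g_X(x ↾ k) ∈ J}` for `J ⊆ C^n_⪯`. -/
noncomputable def DhatSel {n : ℕ} (X : Fin n → Cantor) (J : Set (CIdx n)) : Set (List Bool) :=
  nodeOf X '' J

/-- A map is Baire measurable if preimages of open sets have the Baire property. -/
def BaireMeasurableFun {α β : Type*} [TopologicalSpace α] [TopologicalSpace β]
    (f : α → β) : Prop :=
  ∀ U : Set β, IsOpen U → BaireMeasurableSet (f ⁻¹' U)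

open Filter Topology

/-! ### Reindexing tuples and genericity -/

theorem continuous_extend_left {ι κ Z : Type*} [TopologicalSpace Z] {s : ι → κ}
    (hs : Function.Injective s) (y : κ → Z) :
    Continuous (fun z : ι → Z => Function.extend s z y) := by
  refine continuous_pi fun a => ?_
  by_cases h : ∃ i, s i = a
  · obtain ⟨i, rfl⟩ := h
    simp only [hs.extend_apply]
    exact continuous_apply i
  · simp only [Function.extend_apply' _ _ _ h]
    exact continuous_const

theorem continuous_precomp {ι κ Z : Type*} [TopologicalSpace Z] (s : ι → κ) :
    Continuous (fun y : κ → Z => y ∘ s) :=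
  continuous_pi fun i => continuous_apply (s i)

theorem isOpenMap_precomp {ι κ Z : Type*} [TopologicalSpace Z] {s : ι → κ}
    (hs : Function.Injective s) : IsOpenMap (fun y : κ → Z => y ∘ s) :=
  IsOpenMap.of_sections fun y =>
    ⟨fun z => Function.extend s z y, (continuous_extend_left hs y).continuousAt,
      by
        funext a
        by_cases h : ∃ i, s i = a
        · obtain ⟨i, rfl⟩ := h
          simp [hs.extend_apply]
        · exact Function.extend_apply' _ _ _ h,
      fun z => Function.extend_comp hs z y⟩

/-- Genericity passes to subtuples: a generic `κ`-tuple restricts along an injection `s` to a tuple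
in any given comeager set. -/
theorem residual_precomp {ι κ Z : Type*} [TopologicalSpace Z] {s : ι → κ}
    (hs : Function.Injective s) {C : Set (ι → Z)} (hC : C ∈ residual (ι → Z)) :
    ∀ᶠ y in residual (κ → Z), y ∘ s ∈ C :=
  (tendsto_residual_of_isOpenMap (continuous_precomp s) (isOpenMap_precomp hs)).eventually hC

/-! ### Mycielski's theorem -/

/-- `cut k x` is the initial segment `x ↾ k`, as a function on `Fin k`. -/
def cut (k : ℕ) (x : Cantor) : Fin k → Bool := fun i => x i

/-- Labellings of the nodes of the binary tree `2^{<ω}` by bits. -/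
abbrev Labelling : Type := (Σ k : ℕ, Fin k → Bool) → Bool

/-- The map `2^ω → 2^ω` reading off the labels along a branch. -/
def branchMap (α : Labelling) (x : Cantor) : Cantor := fun k => α ⟨k, cut k x⟩

theorem continuous_cut (k : ℕ) : Continuous (cut k) :=
  continuous_pi fun i => continuous_apply (i : ℕ)

theorem continuous_branchMap₂ : Continuous (fun p : Labelling × Cantor => branchMap p.1 p.2) := by
  refine continuous_pi fun k => ?_
  have h : Continuous (fun q : Labelling × (Fin k → Bool) => q.1 ⟨k, q.2⟩) := by
    rw [continuous_prod_of_discrete_right]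
    intro b
    exact continuous_apply (A := fun _ : (Σ k : ℕ, Fin k → Bool) => Bool) ⟨k, b⟩
  exact h.comp (continuous_fst.prodMk ((continuous_cut k).comp continuous_snd))

theorem cut_injective_mono {ι : Type*} {x : ι → Cantor} {k l : ℕ} (hkl : k ≤ l)
    (h : Function.Injective fun i => cut k (x i)) : Function.Injective fun i => cut l (x i) := by
  intro i j hij
  apply h
  funext m
  exact congrFun hij (Fin.castLE hkl m)

theorem exists_cut_injective {ι : Type*} [Finite ι] {x : ι → Cantor}
    (hx : Function.Injective x) : ∃ k, Function.Injective fun i => cut k (x i) := by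
  have h : ∀ p : ι × ι, ∀ᶠ k in atTop, p.1 ≠ p.2 → cut k (x p.1) ≠ cut k (x p.2) := by
    intro p
    by_cases hp : p.1 = p.2
    · simp [hp]
    · obtain ⟨m, hm⟩ := Function.ne_iff.mp (hx.ne hp)
      filter_upwards [eventually_gt_atTop m] with k hk _ hcut
      exact hm (congrFun hcut ⟨m, hk⟩)
  obtain ⟨k, hk⟩ := (eventually_all.mpr h).exists
  refine ⟨k, fun i j hij => ?_⟩
  by_contra hne
  exact hk (i, j) hne hij

/-- Labellings whose branch map sends every tuple of branches that are already distinct at level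
`k` into the open dense set `G` are generic. -/
theorem eventually_branchMap {ι : Type*} [Finite ι] {G : Set (ι → Cantor)} (hGo : IsOpen G)
    (hGd : Dense G) (k : ℕ) :
    ∀ᶠ α in residual Labelling, ∀ x : ι → Cantor,
      (Function.Injective fun i => cut k (x i)) → (fun i => branchMap α (x i)) ∈ G := by
  refine residual_of_dense_open ?_ ?_
  · -- the complement is the projection of a closed set along the compact space of tuples
    have hcl : IsClosed {p : (ι → Cantor) × Labelling |
        (Function.Injective fun i => cut k (p.1 i)) ∧ (fun i => branchMap p.2 (p.1 i)) ∉ G} := by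
      refine IsClosed.inter ?_ ?_
      · have hc : Continuous fun p : (ι → Cantor) × Labelling => fun i => cut k (p.1 i) :=
          continuous_pi fun i =>
            (continuous_cut k).comp ((continuous_apply i).comp continuous_fst)
        exact (isClosed_discrete
          {g : ι → Fin k → Bool | Function.Injective g}).preimage hc
      · have hc : Continuous fun p : (ι → Cantor) × Labelling =>
            fun i => branchMap p.2 (p.1 i) :=
          continuous_pi fun i => continuous_branchMap₂.comp
            (continuous_snd.prodMk ((continuous_apply i).comp continuous_fst))
        exact hGo.isClosed_compl.preimage hc
    have := (isClosedMap_snd_of_compactSpace _ hcl).isOpen_compl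
    convert this using 1
    ext α
    simp
  · rw [dense_iff_inter_open]
    rintro D hD ⟨α₀, hα₀⟩
    obtain ⟨I, u, hu, hIu⟩ := isOpen_pi_iff.mp hD α₀ hα₀
    obtain ⟨l, hl⟩ : ∃ l, ∀ a ∈ I, a.1 < l :=
      ⟨I.sup Sigma.fst + 1, fun a ha => Nat.lt_succ_of_le (Finset.le_sup (f := Sigma.fst) ha)⟩
    set L := max k l with hL
    -- one branch above each node of level `L`; the labelling will only follow these
    let y₀ : (Fin L → Bool) → Cantor := fun s j =>
      if h : j < L then α₀ ⟨j, fun i => s (Fin.castLE h.le i)⟩ else false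
    have hgen : ∀ᶠ y in residual ((Fin L → Bool) → Cantor),
        ∀ s : ι → Fin L → Bool, Function.Injective s → y ∘ s ∈ G := by
      refine eventually_all.mpr fun s => ?_
      by_cases hs : Function.Injective s
      · filter_upwards [residual_precomp hs (residual_of_dense_open hGo hGd)] with y hy _
        exact hy
      · simp [hs]
    have hVo : IsOpen {y : (Fin L → Bool) → Cantor | ∀ s, ∀ j : Fin L, y s j = y₀ s j} := by
      simp only [ofPred_forall]
      refine isOpen_iInter_of_finite fun s => isOpen_iInter_of_finite fun j => ?_
      have hc : Continuous fun y : (Fin L → Bool) → Cantor => y s j :=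
        (continuous_apply (j : ℕ)).comp (continuous_apply s)
      exact (isOpen_discrete {y₀ s j}).preimage hc
    -- the labels below level `L` are those of `α₀`, so only the tails of the branches are generic
    obtain ⟨y, hyV, hyG⟩ := (dense_of_mem_residual hgen).inter_open_nonempty _ hVo
      ⟨y₀, fun _ _ => rfl⟩
    let α : Labelling := fun a =>
      if h : a.1 < L then α₀ a else y (fun i => a.2 (Fin.castLE (not_lt.mp h) i)) a.1
    refine ⟨α, hIu ?_, ?_⟩
    · intro a ha
      have hlt : a.1 < L := (hl a ha).trans_le (le_max_right _ _)
      have : α a = α₀ a := by simp [α, hlt]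
      rw [this]
      exact (hu a ha).2
    · intro x hx
      have hbr : ∀ x : Cantor, branchMap α x = y (cut L x) := by
        intro x
        funext j
        by_cases h : j < L
        · have := hyV (cut L x) ⟨j, h⟩
          simp only [branchMap, α, h, dif_pos]
          simp only [y₀, h, dif_pos] at this
          rw [this]
          rfl
        · simp only [branchMap, α, h, dif_neg, not_false_eq_true]
          rfl
      simp only [hbr]
      exact hyG _ (cut_injective_mono (le_max_left _ _) hx)

/-- A generic labelling has a branch map sending all injective tuples into a given comeager set. -/
theorem eventually_branchMap_residual {ι : Type*} [Finite ι] {C : Set (ι → Cantor)}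
    (hC : C ∈ residual (ι → Cantor)) :
    ∀ᶠ α in residual Labelling, ∀ x : ι → Cantor, Function.Injective x →
      (fun i => branchMap α (x i)) ∈ C := by
  obtain ⟨S, hSo, hSd, hSc, hSC⟩ := mem_residual_iff.mp hC
  have h : ∀ G ∈ S, ∀ᶠ α in residual Labelling, ∀ k, ∀ x : ι → Cantor,
      (Function.Injective fun i => cut k (x i)) → (fun i => branchMap α (x i)) ∈ G :=
    fun G hG => eventually_countable_forall.mpr fun k =>
      eventually_branchMap (hSo G hG) (hSd G hG) k
  filter_upwards [(eventually_countable_ball hSc).mpr h] with α hα x hx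
  obtain ⟨k, hk⟩ := exists_cut_injective hx
  exact hSC fun G hG => hα G hG k x hk

/-- The Cantor space has no isolated points: flipping a late coordinate gives a nearby point. -/
theorem cantor_nhdsNE_neBot (x : Cantor) : (𝓝[≠] x).NeBot := by
  have h1 : Tendsto (fun k => Function.update x k (!x k)) atTop (𝓝 x) := by
    refine tendsto_pi_nhds.mpr fun m => tendsto_const_nhds.congr' ?_
    filter_upwards [eventually_gt_atTop m] with k hk
    rw [Function.update_of_ne hk.ne]
  have h2 : Tendsto (fun k => Function.update x k (!x k)) atTop (𝓝[≠] x) := by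
    refine tendsto_nhdsWithin_iff.mpr ⟨h1, Eventually.of_forall fun k => ?_⟩
    intro hk
    simpa using congrFun hk k
  exact h2.neBot

theorem dense_ne : Dense {z : Bool → Cantor | z false ≠ z true} := by
  rw [dense_iff_inter_open]
  rintro D hD ⟨z, hz⟩
  by_cases h : z false = z true
  · have hne := cantor_nhdsNE_neBot (z true)
    have hc : Continuous fun t : Cantor => Function.update z true t :=
      continuous_const.update true continuous_id
    have hev : ∀ᶠ t in 𝓝[≠] (z true), Function.update z true t ∈ D :=
      (hc.continuousAt.eventually (by simpa using hD.mem_nhds hz)).filter_mono nhdsWithin_le_nhds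
    obtain ⟨t, ht, hne⟩ := (hev.and self_mem_nhdsWithin).exists
    refine ⟨_, ht, ?_⟩
    simp only [mem_ofPred_eq, Function.update_self, ne_eq]
    rw [Function.update_of_ne (by simp), h]
    exact fun h => hne h.symm
  · exact ⟨z, hz, h⟩

/-- Mycielski's theorem: for a comeager set `C` of tuples there is a perfect set all of whose
injective tuples lie in `C`. -/
theorem mycielski {ι : Type*} [Finite ι] {C : Set (ι → Cantor)}
    (hC : C ∈ residual (ι → Cantor)) :
    ∃ P : Set Cantor, PerfectSet P ∧ IsCompact P ∧ P.Infinite ∧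
      ∀ z : ι → Cantor, Function.Injective z → (∀ i, z i ∈ P) → z ∈ C := by
  -- applied to pairs of distinct points, genericity makes the branch map injective
  have hne : ∀ᶠ z in residual (Bool → Cantor), z false ≠ z true :=
    residual_of_dense_open
      (isOpen_ne_fun (continuous_apply false) (continuous_apply true)) dense_ne
  obtain ⟨α, h1, h2⟩ :=
    (dense_of_mem_residual ((eventually_branchMap_residual hC).and
      (eventually_branchMap_residual hne))).nonempty
  have hcont : Continuous (branchMap α) :=
    continuous_branchMap₂.comp (continuous_const.prodMk continuous_id)
  have hinj : Function.Injective (branchMap α) := by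
    intro a b hab
    by_contra hne
    refine h2 (fun i => cond i b a) ?_ (by simpa using hab)
    intro i j
    cases i <;> cases j <;> simp [hne, Ne.symm hne]
  have hcpt : IsCompact (range (branchMap α)) := isCompact_range hcont
  refine ⟨range (branchMap α), ⟨⟨hcpt.isClosed, ?_⟩, range_nonempty _⟩, hcpt,
    infinite_range_of_injective hinj, ?_⟩
  · rintro _ ⟨a, rfl⟩
    rw [accPt_iff_frequently]
    have hne := cantor_nhdsNE_neBot a
    have ht : Tendsto (branchMap α) (𝓝[≠] a) (𝓝 (branchMap α a)) :=
      hcont.continuousAt.tendsto.mono_left nhdsWithin_le_nhds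
    refine ht.frequently (Eventually.frequently ?_)
    filter_upwards [self_mem_nhdsWithin] with b hb
    exact ⟨hinj.ne hb, b, rfl⟩
  · intro z hz hzP
    choose x hx using hzP
    have : z = fun i => branchMap α (x i) := funext fun i => (hx i).symm
    rw [this]
    exact h1 x fun i j hij => hz (by rw [← hx i, ← hx j, hij])

/-! ### Patterns and local independence of coordinates -/

/-- The pattern `shift J` on `2n` points: coordinate `j` is read from the second block when
`j ∈ J` and from the first block otherwise. -/
noncomputable def shift {n : ℕ} (J : Set (Fin n)) (j : Fin n) : Fin n ⊕ Fin n :=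
  haveI := Classical.dec (j ∈ J)
  if j ∈ J then Sum.inr j else Sum.inl j

theorem shift_of_mem {n : ℕ} {J : Set (Fin n)} {j : Fin n} (h : j ∈ J) :
    shift J j = Sum.inr j := by simp [shift, h]

theorem shift_of_notMem {n : ℕ} {J : Set (Fin n)} {j : Fin n} (h : j ∉ J) :
    shift J j = Sum.inl j := by simp [shift, h]

theorem shift_injective {n : ℕ} (J : Set (Fin n)) : Function.Injective (shift J) := by
  intro i j h
  by_cases hi : i ∈ J <;> by_cases hj : j ∈ J <;>
    simp_all [shift]

/-- If `E` holds near `z` for the pattern `τ`, and `τ` takes the coordinates in `J` from outside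
the first block, then near `z ∘ τ` the relation `E` does not depend on the coordinates in `J`:
two nearby tuples differing only in `J` are generically equivalent to a common first block. -/
theorem shift_movable {n : ℕ} {E : Set ((Fin n → Cantor) × (Fin n → Cantor))}
    (hsymm : ∀ X Y, (X, Y) ∈ E → (Y, X) ∈ E)
    (htrans : ∀ X Y Z, (X, Y) ∈ E → (Y, Z) ∈ E → (X, Z) ∈ E)
    {C : Set (Fin n ⊕ Fin n → Cantor)} (hC : C ∈ residual (Fin n ⊕ Fin n → Cantor))
    {U : (Fin n → Fin n ⊕ Fin n) → Set (Fin n ⊕ Fin n → Cantor)} (hUo : ∀ τ, IsOpen (U τ))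
    (hCU : ∀ z ∈ C, ∀ τ, ((z ∘ Sum.inl, z ∘ τ) ∈ E ↔ z ∈ U τ))
    {τ : Fin n → Fin n ⊕ Fin n} (hτ : Function.Injective τ)
    {J : Set (Fin n)} (hJ : ∀ j ∈ J, ∀ i, τ j ≠ Sum.inl i)
    {z : Fin n ⊕ Fin n → Cantor} (hz : z ∈ U τ) :
    ∃ N : Set (Fin n → Cantor), IsOpen N ∧ z ∘ τ ∈ N ∧
      ∀ v : Fin n ⊕ Fin n → Cantor, v ∘ Sum.inl ∈ N → v ∘ shift J ∈ N →
        v ∈ closure (U (shift J)) := by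
  refine ⟨{Y | Function.extend τ Y z ∈ U τ},
    (hUo τ).preimage (continuous_extend_left hτ z), ?_, ?_⟩
  · have : Function.extend τ (z ∘ τ) z = z := by
      funext a
      by_cases h : ∃ i, τ i = a
      · obtain ⟨i, rfl⟩ := h
        exact hτ.extend_apply _ _ _
      · exact Function.extend_apply' _ _ _ h
    change Function.extend τ (z ∘ τ) z ∈ U τ
    rwa [this]
  · intro v hv1 hv2
    rw [mem_closure_iff]
    intro O hO hvO
    -- both reindexings place a tuple read off from `v` at the positions of `τ`, and share all
    -- their remaining points, in particular their whole first block
    let e (ρ : Fin n → Fin n ⊕ Fin n) : Fin n ⊕ Fin n → (Fin n ⊕ Fin n) ⊕ (Fin n ⊕ Fin n) :=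
      Function.extend τ (fun j => Sum.inl (ρ j)) Sum.inr
    have he : ∀ ρ : Fin n → Fin n ⊕ Fin n, Function.Injective ρ → Function.Injective (e ρ) := by
      intro ρ hρ a b hab
      by_cases ha : ∃ i, τ i = a <;> by_cases hb : ∃ i, τ i = b
      · obtain ⟨i, rfl⟩ := ha
        obtain ⟨j, rfl⟩ := hb
        simp only [e, hτ.extend_apply, Sum.inl.injEq] at hab
        rw [hρ hab]
      · obtain ⟨i, rfl⟩ := ha
        simp [e, hτ.extend_apply, Function.extend_apply' _ _ _ hb] at hab
      · obtain ⟨i, rfl⟩ := hb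
        simp [e, hτ.extend_apply, Function.extend_apply' _ _ _ ha] at hab
      · simpa [e, Function.extend_apply' _ _ _ ha, Function.extend_apply' _ _ _ hb] using hab
    have hev : ∀ ρ : Fin n → Fin n ⊕ Fin n,
        Sum.elim v z ∘ e ρ = Function.extend τ (v ∘ ρ) z := by
      intro ρ
      funext a
      by_cases ha : ∃ i, τ i = a
      · obtain ⟨i, rfl⟩ := ha
        simp [e, hτ.extend_apply]
      · simp [e, Function.extend_apply' _ _ _ ha]
    have hei : ∀ ρ : Fin n → Fin n ⊕ Fin n, e ρ ∘ τ = Sum.inl ∘ ρ := by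
      intro ρ
      funext j
      simp [e, hτ.extend_apply]
    have hshare : e Sum.inl ∘ Sum.inl = e (shift J) ∘ Sum.inl := by
      funext i
      by_cases ha : ∃ j, τ j = Sum.inl i
      · obtain ⟨j, hj⟩ := ha
        have hjJ : j ∉ J := fun h => hJ j h i hj
        simp [e, ← hj, hτ.extend_apply, shift_of_notMem hjJ]
      · simp [e, Function.extend_apply' _ _ _ ha]
    -- approximate `(v, z)` by a tuple `w` all of whose relevant subtuples are generic
    have hopen : IsOpen {w : (Fin n ⊕ Fin n) ⊕ (Fin n ⊕ Fin n) → Cantor |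
        w ∘ Sum.inl ∈ O ∧ w ∘ e Sum.inl ∈ U τ ∧ w ∘ e (shift J) ∈ U τ} :=
      (hO.preimage (continuous_precomp _)).inter
        (((hUo τ).preimage (continuous_precomp _)).inter
          ((hUo τ).preimage (continuous_precomp _)))
    have hgen := ((residual_precomp Sum.inl_injective hC).and
      (residual_precomp (he _ Sum.inl_injective) hC)).and
      (residual_precomp (he _ (shift_injective J)) hC)
    obtain ⟨w, ⟨hwO, hw1, hw2⟩, ⟨hwC, hwC1⟩, hwC2⟩ :=
      (dense_of_mem_residual hgen).inter_open_nonempty _ hopen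
        ⟨Sum.elim v z, by simpa using hvO, by rw [hev]; exact hv1, by rw [hev]; exact hv2⟩
    refine ⟨w ∘ Sum.inl, hwO, (hCU _ hwC _).mp ?_⟩
    have h1 := (hCU _ hwC1 _).mpr hw1
    have h2 := (hCU _ hwC2 _).mpr hw2
    simp only [Function.comp_assoc, hei, ← hshare] at h1 h2 ⊢
    exact htrans _ _ _ (hsymm _ _ h1) h2

/-- The tuple of `2n` points whose first block is `X` and whose second block is `Y` on `K`, filled
up with the auxiliary points `q` off `K`. -/
noncomputable def glue {n : ℕ} (q : Fin n → Cantor) (K : Set (Fin n)) (X Y : Fin n → Cantor) :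
    Fin n ⊕ Fin n → Cantor :=
  Sum.elim X (fun j => haveI := Classical.dec (j ∈ K); if j ∈ K then Y j else q j)

theorem glue_inl {n : ℕ} (q : Fin n → Cantor) (K : Set (Fin n)) (X Y : Fin n → Cantor)
    (i : Fin n) : glue q K X Y (Sum.inl i) = X i := rfl

theorem glue_inr_mem {n : ℕ} (q : Fin n → Cantor) {K : Set (Fin n)} (X Y : Fin n → Cantor)
    {j : Fin n} (h : j ∈ K) : glue q K X Y (Sum.inr j) = Y j := by simp [glue, h]

theorem glue_inr_notMem {n : ℕ} (q : Fin n → Cantor) {K : Set (Fin n)} (X Y : Fin n → Cantor)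
    {j : Fin n} (h : j ∉ K) : glue q K X Y (Sum.inr j) = q j := by simp [glue, h]

theorem glue_injective {n : ℕ} {q : Fin n → Cantor} {K : Set (Fin n)} {X Y : Fin n → Cantor}
    (hX : Function.Injective X) (hY : ∀ i ∈ K, ∀ j ∈ K, Y i = Y j → i = j)
    (hq : Function.Injective q) (hXq : ∀ i j, X i ≠ q j) (hYq : ∀ i ∈ K, ∀ j, Y i ≠ q j)
    (hXY : ∀ i, ∀ j ∈ K, X i ≠ Y j) : Function.Injective (glue q K X Y) := by
  refine Function.Injective.sumElim hX ?_ ?_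
  · intro i j h
    by_cases hi : i ∈ K <;> by_cases hj : j ∈ K <;> simp only [hi, hj, if_true, if_false] at h
    · exact hY i hi j hj h
    · exact absurd h (hYq i hi j)
    · exact absurd h.symm (hYq j hj i)
    · exact hq h
  · intro i j
    by_cases hj : j ∈ K <;> simp only [hj, if_true, if_false]
    · exact hXY i j hj
    · exact hXq i j

theorem glue_mem {n : ℕ} {q : Fin n → Cantor} {K : Set (Fin n)} {X Y : Fin n → Cantor}
    {P : Set Cantor} (hX : ∀ i, X i ∈ P) (hY : ∀ i, Y i ∈ P) (hq : ∀ i, q i ∈ P)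
    (a : Fin n ⊕ Fin n) : glue q K X Y a ∈ P := by
  rcases a with i | j
  · exact hX i
  · by_cases hj : j ∈ K
    · rw [glue_inr_mem _ _ _ hj]; exact hY j
    · rw [glue_inr_notMem _ _ _ hj]; exact hq j

theorem continuous_glue {n : ℕ} (q : Fin n → Cantor) (K : Set (Fin n)) :
    Continuous fun p : (Fin n → Cantor) × (Fin n → Cantor) => glue q K p.1 p.2 := by
  refine continuous_pi fun a => ?_
  rcases a with i | j
  · exact (continuous_apply i).comp continuous_fst
  · by_cases hj : j ∈ K
    · simp only [glue_inr_mem _ _ _ hj]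
      exact (continuous_apply j).comp continuous_snd
    · simp only [glue_inr_notMem _ _ _ hj]
      exact continuous_const

/-! ### A perfect set on which the relation is closed -/

theorem eventually_notMem_frontier {X : Type*} [TopologicalSpace X] {U : Set X} (hU : IsOpen U) :
    ∀ᶠ x in residual X, x ∉ frontier U := by
  refine residual_of_dense_open isClosed_frontier.isOpen_compl ?_
  change Dense (frontier U)ᶜ
  rw [← interior_eq_empty_iff_dense_compl, ← frontier_compl]
  exact interior_frontier hU.isClosed_compl

theorem eventually_ne_of_continuous {X : Type*} [TopologicalSpace X] {f g : X → Cantor}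
    (hf : Continuous f) (hg : Continuous g) {x : X} (h : f x ≠ g x) : ∀ᶠ y in 𝓝 x, f y ≠ g y :=
  (isOpen_ne_fun hf hg).mem_nhds h

/-- There is a perfect set `P` such that `E` is relatively closed on the injective tuples
from `P`. -/
theorem exists_perfect_closed {n : ℕ} {E : Set ((Fin n → Cantor) × (Fin n → Cantor))}
    (hE : MeasurableSet E)
    (hsymm : ∀ X Y, (X, Y) ∈ E → (Y, X) ∈ E)
    (htrans : ∀ X Y Z, (X, Y) ∈ E → (Y, Z) ∈ E → (X, Z) ∈ E) :
    ∃ P : Set Cantor, PerfectSet P ∧ IsCompact P ∧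
      ∀ X Y : Fin n → Cantor, Function.Injective X → Function.Injective Y →
        (∀ i, X i ∈ P) → (∀ i, Y i ∈ P) → (X, Y) ∉ E →
        ∀ᶠ p in 𝓝 (X, Y), (∀ i, p.1 i ∈ P) → (∀ i, p.2 i ∈ P) → p ∉ E := by
  classical
  have hU : ∀ τ : Fin n → Fin n ⊕ Fin n, ∃ U : Set (Fin n ⊕ Fin n → Cantor), IsOpen U ∧
      ∀ᶠ z in residual (Fin n ⊕ Fin n → Cantor), ((z ∘ Sum.inl, z ∘ τ) ∈ E ↔ z ∈ U) := by
    intro τ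
    have hc : Continuous fun z : Fin n ⊕ Fin n → Cantor => (z ∘ Sum.inl, z ∘ τ) :=
      (continuous_precomp _).prodMk (continuous_precomp _)
    have hm : MeasurableSet
        {z : Fin n ⊕ Fin n → Cantor | (z ∘ Sum.inl, z ∘ τ) ∈ E} := hc.measurable hE
    obtain ⟨U, hUo, hUE⟩ := hm.residualEq_isOpen
    exact ⟨U, hUo, hUE.mem_iff⟩
  choose U hUo hUE using hU
  let C : Set (Fin n ⊕ Fin n → Cantor) :=
    {z | ∀ τ, ((z ∘ Sum.inl, z ∘ τ) ∈ E ↔ z ∈ U τ) ∧ z ∉ frontier (U τ)}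
  have hC : C ∈ residual (Fin n ⊕ Fin n → Cantor) :=
    eventually_all.mpr fun τ => (hUE τ).and (eventually_notMem_frontier (hUo τ))
  have hCU : ∀ z ∈ C, ∀ τ, ((z ∘ Sum.inl, z ∘ τ) ∈ E ↔ z ∈ U τ) := fun z hz τ => (hz τ).1
  have hcl : ∀ z ∈ C, ∀ τ, z ∈ closure (U τ) → z ∈ U τ := by
    intro z hz τ hzc
    by_contra hn
    exact (hz τ).2 ((hUo τ).frontier_eq ▸ ⟨hzc, hn⟩)
  -- `W J` consists of the tuples near which `E` does not depend on the coordinates in `J`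
  let W : Set (Fin n) → Set (Fin n → Cantor) := fun J => {Y | ∃ N : Set (Fin n → Cantor),
    IsOpen N ∧ Y ∈ N ∧ ∀ v : Fin n ⊕ Fin n → Cantor, v ∘ Sum.inl ∈ N → v ∘ shift J ∈ N →
      v ∈ closure (U (shift J))}
  have hWo : ∀ J, IsOpen (W J) := by
    intro J
    rw [isOpen_iff_mem_nhds]
    rintro Y ⟨N, hN, hYN, h⟩
    exact mem_of_superset (hN.mem_nhds hYN) fun Y' hY' => ⟨N, hN, hY', h⟩
  have hD : ∀ᶠ z in residual (Fin n ⊕ Fin n → Cantor), ∀ J, z ∘ Sum.inl ∉ frontier (W J) :=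
    eventually_all.mpr fun J =>
      residual_precomp Sum.inl_injective (eventually_notMem_frontier (hWo J))
  obtain ⟨P, hP, hPc, hPinf, hPgen⟩ := mycielski (hD.and hC)
  refine ⟨P, hP, hPc, ?_⟩
  intro X Y hX hY hXP hYP hXY
  -- auxiliary points of `P` outside `X` and `Y`
  obtain ⟨q, hqinj, hqP, hXq, hYq⟩ : ∃ q : Fin n → Cantor, Function.Injective q ∧
      (∀ i, q i ∈ P) ∧ (∀ i j, X i ≠ q j) ∧ (∀ i j, Y i ≠ q j) := by
    have hinf : (P \ (range X ∪ range Y)).Infinite :=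
      hPinf.sdiff ((finite_range X).union (finite_range Y))
    let g := hinf.natEmbedding
    refine ⟨fun i => g i, fun i j h => ?_, fun i => (g i).2.1, fun i j h => ?_, fun i j h => ?_⟩
    · exact Fin.ext (g.injective (Subtype.ext h))
    · exact (g j).2.2 (Or.inl ⟨i, h⟩)
    · exact (g j).2.2 (Or.inr ⟨i, h⟩)
  let J : Set (Fin n) := {j | ∃ i, X i = Y j}
  have hσ : ∀ j, ∃ i, j ∈ J → X i = Y j := by
    intro j
    by_cases hj : j ∈ J
    · obtain ⟨i, hi⟩ := hj
      exact ⟨i, fun _ => hi⟩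
    · exact ⟨j, fun h => absurd h hj⟩
  choose σ hσ using hσ
  have hσinj : ∀ i ∈ J, ∀ j ∈ J, σ i = σ j → i = j := by
    intro i hi j hj h
    apply hY
    rw [← hσ i hi, ← hσ j hj, h]
  -- the pattern `τ K` reads coordinate `j` from the second block if `j ∈ K`, and otherwise from the
  -- point of the first block with which `Y j` coincides when `j ∈ J`
  let τ : Set (Fin n) → Fin n → Fin n ⊕ Fin n := fun K j =>
    if j ∈ K then Sum.inr j else Sum.inl (σ j)
  have hτmem : ∀ K j, j ∈ K → τ K j = Sum.inr j := fun K j h => if_pos h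
  have hτnot : ∀ K j, j ∉ K → τ K j = Sum.inl (σ j) := fun K j h => if_neg h
  have ev1 : ∀ᶠ p in 𝓝 (X, Y), ∀ i j, i ≠ j → p.1 i ≠ p.1 j := by
    refine eventually_all.mpr fun i => eventually_all.mpr fun j => ?_
    by_cases hij : i = j
    · simp [hij]
    · filter_upwards [eventually_ne_of_continuous
        ((continuous_apply i).comp continuous_fst) ((continuous_apply j).comp continuous_fst)
        (show X i ≠ X j from hX.ne hij)] with p hp _ using hp
  have ev2 : ∀ᶠ p in 𝓝 (X, Y), ∀ i j, i ≠ j → p.2 i ≠ p.2 j := by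
    refine eventually_all.mpr fun i => eventually_all.mpr fun j => ?_
    by_cases hij : i = j
    · simp [hij]
    · filter_upwards [eventually_ne_of_continuous
        ((continuous_apply i).comp continuous_snd) ((continuous_apply j).comp continuous_snd)
        (show Y i ≠ Y j from hY.ne hij)] with p hp _ using hp
  have ev3 : ∀ᶠ p in 𝓝 (X, Y), ∀ i j, X i ≠ Y j → p.1 i ≠ p.2 j := by
    refine eventually_all.mpr fun i => eventually_all.mpr fun j => ?_
    by_cases hij : X i = Y j
    · simp [hij]
    · filter_upwards [eventually_ne_of_continuous
        ((continuous_apply i).comp continuous_fst) ((continuous_apply j).comp continuous_snd)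
        (show X i ≠ Y j from hij)] with p hp _ using hp
  have ev4 : ∀ᶠ p in 𝓝 (X, Y), ∀ i j, p.1 i ≠ q j :=
    eventually_all.mpr fun i => eventually_all.mpr fun j => eventually_ne_of_continuous
      ((continuous_apply i).comp continuous_fst) continuous_const (hXq i j)
  have ev5 : ∀ᶠ p in 𝓝 (X, Y), ∀ i j, p.2 i ≠ q j :=
    eventually_all.mpr fun i => eventually_all.mpr fun j => eventually_ne_of_continuous
      ((continuous_apply i).comp continuous_snd) continuous_const (hYq i j)
  have hJc : ∀ i, ∀ j ∈ Jᶜ, X i ≠ Y j := fun i j hj h => hj ⟨i, h⟩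
  -- `τ Jᶜ` is the pattern of coincidences of `(X, Y)`
  have hread : (glue q Jᶜ X Y) ∘ τ Jᶜ = Y := by
    funext j
    by_cases hj : j ∈ Jᶜ
    · simp [hτmem _ _ hj, glue_inr_mem _ _ _ hj]
    · simp [hτnot _ _ hj, glue_inl, hσ j (not_not.mp hj)]
  have ev6 : ∀ᶠ p in 𝓝 (X, Y), glue q Jᶜ p.1 p.2 ∉ U (τ Jᶜ) := by
    have hz : glue q Jᶜ X Y ∈ C := (hPgen _ (glue_injective hX (fun i _ j _ h => hY h) hqinj hXq
      (fun i _ j => hYq i j) hJc) (glue_mem hXP hYP hqP)).2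
    have hzU : glue q Jᶜ X Y ∉ closure (U (τ Jᶜ)) := by
      intro h
      have := (hCU _ hz _).mpr (hcl _ hz _ h)
      rw [hread] at this
      exact hXY this
    have ht := (continuous_glue q Jᶜ).tendsto (X, Y)
    filter_upwards [ht.eventually (isClosed_closure.isOpen_compl.mem_nhds hzU)] with p hp h using hp (subset_closure h)
  -- there are finitely many sets `K` of coordinates at which a coincidence of `(X, Y)` can be
  -- broken in `p`, so each may be treated separately
  suffices h : ∀ K : Set (Fin n), ∀ᶠ p in 𝓝 (X, Y), (∀ i, p.1 i ∈ P) → (∀ i, p.2 i ∈ P) →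
      {j | j ∈ J ∧ ∀ i, p.1 i ≠ p.2 j} = K → p ∉ E by
    filter_upwards [eventually_all.mpr h] with p hp h1 h2
    exact hp _ h1 h2 rfl
  intro K
  by_cases hYW : Y ∈ W K
  -- near `Y` the coordinates in `K` are irrelevant, so the broken coincidences can be restored:
  -- `Z ∘ τ Jᶜ` is `p.2` with its coordinates in `K` moved onto those of `p.1`
  · obtain ⟨N, hNo, hYN, hN⟩ := hYW
    have ev7 : ∀ᶠ p in 𝓝 (X, Y), p.2 ∈ N :=
      continuous_snd.continuousAt.eventually (hNo.mem_nhds hYN)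
    have ev8 : ∀ᶠ p in 𝓝 (X, Y), (glue q Jᶜ p.1 p.2) ∘ τ Jᶜ ∈ N :=
      (((continuous_precomp (τ Jᶜ)).comp (continuous_glue q Jᶜ)).tendsto (X, Y)).eventually
        (hNo.mem_nhds (by simpa [hread] using hYN))
    filter_upwards [ev1, ev2, ev3, ev4, ev5, ev6, ev7, ev8]
      with p h1 h2 h3 h4 h5 h6 h7 h8 hp1 hp2 hK hpE
    have hKJ : ∀ j ∈ K, j ∈ J := fun j hj => (hK.ge hj).1
    have hKne : ∀ j ∈ K, ∀ i, p.1 i ≠ p.2 j := fun j hj => (hK.ge hj).2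
    have h1' : Function.Injective p.1 := fun i j h => by_contra fun hne => h1 i j hne h
    have h2' : Function.Injective p.2 := fun i j h => by_contra fun hne => h2 i j hne h
    set Z := glue q Jᶜ p.1 p.2 with hZ
    have hZP : ∀ a, Z a ∈ P := glue_mem hp1 hp2 hqP
    have hZJ : ∀ j ∈ J, Z (τ Jᶜ j) = p.1 (σ j) := by
      intro j hj
      simp [hτnot Jᶜ j (not_not.mpr hj), hZ, glue_inl]
    have hZK : ∀ j ∉ K, Z (τ Jᶜ j) = p.2 j := by
      intro j hjK
      by_cases hj : j ∈ J
      · rw [hZJ j hj]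
        have hne : ¬ ∀ i, p.1 i ≠ p.2 j := fun h => hjK (hK.le ⟨hj, h⟩)
        push Not at hne
        obtain ⟨i, hi⟩ := hne
        have : X i = X (σ j) := by
          rw [hσ j hj]
          exact by_contra fun hne => h3 i j hne hi
        rw [← hX this, hi]
      · have hj' : j ∈ Jᶜ := hj
        simp [hτmem _ _ hj', hZ, glue_inr_mem _ _ _ hj']
    have hZC : Z ∈ C := (hPgen _ (glue_injective h1' (fun i _ j _ h => h2' h) hqinj h4
      (fun i _ j => h5 i j) (fun i j hj => h3 i j (hJc i j hj))) hZP).2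
    have hvC : glue q K p.2 (Z ∘ τ Jᶜ) ∈ C := by
      refine (hPgen _ (glue_injective h2' ?_ hqinj h5 ?_ ?_)
        (glue_mem hp2 (fun i => hZP _) hqP)).2
      · intro i hi j hj h
        simp only [hZJ i (hKJ i hi), hZJ j (hKJ j hj)] at h
        exact hσinj i (hKJ i hi) j (hKJ j hj) (h1' h)
      · intro i hi j
        simp only [hZJ i (hKJ i hi)]
        exact h4 _ _
      · intro i j hj h
        simp only [hZJ j (hKJ j hj)] at h
        by_cases hij : i = j
        · exact hKne j hj _ (hij ▸ h.symm)
        · refine h3 (σ j) i ?_ h.symm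
          rw [hσ j (hKJ j hj)]
          exact fun h => hij (hY h).symm
    have hshift : glue q K p.2 (Z ∘ τ Jᶜ) ∘ shift K = Z ∘ τ Jᶜ := by
      funext j
      by_cases hj : j ∈ K
      · simp [shift_of_mem hj, glue_inr_mem _ _ _ hj]
      · change _ = Z (τ Jᶜ j)
        rw [hZK j hj]
        simp [shift_of_notMem hj, glue_inl]
    have hinl : glue q K p.2 (Z ∘ τ Jᶜ) ∘ Sum.inl = p.2 := rfl
    have hE2 := (hCU _ hvC _).mpr (hcl _ hvC _ (hN _ (hinl ▸ h7) (hshift.symm ▸ h8)))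
    rw [hshift, hinl] at hE2
    exact h6 ((hCU _ hZC _).mp (htrans _ _ _ hpE hE2))
  -- otherwise `W K` is disjoint from a neighbourhood of `Y`, whereas `p ∈ E` forces `p.2 ∈ W K`
  · have hYC : Y ∉ closure (W K) := by
      intro hcY
      have := (hPgen (glue q ∅ Y Y) (glue_injective hY (fun i hi => hi.elim) hqinj hYq
        (fun i hi => hi.elim) (fun i j hj => hj.elim)) (glue_mem hYP hYP hqP)).1 K
      exact this ((hWo K).frontier_eq ▸ ⟨hcY, hYW⟩)
    have ev7 : ∀ᶠ p in 𝓝 (X, Y), p.2 ∉ closure (W K) :=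
      (continuous_snd.tendsto (X, Y)).eventually (isClosed_closure.isOpen_compl.mem_nhds hYC)
    filter_upwards [ev1, ev2, ev3, ev4, ev5, ev7] with p h1 h2 h3 h4 h5 h7 hp1 hp2 hK hpE
    have hKJ : ∀ j ∈ K, j ∈ J := fun j hj => (hK.ge hj).1
    have hKne : ∀ j ∈ K, ∀ i, p.1 i ≠ p.2 j := fun j hj => (hK.ge hj).2
    have h1' : Function.Injective p.1 := fun i j h => by_contra fun hne => h1 i j hne h
    have h2' : Function.Injective p.2 := fun i j h => by_contra fun hne => h2 i j hne h
    -- `L` indexes the points of `p.2` outside `p.1`; the others are read from `p.1`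
    set L := Jᶜ ∪ K with hL
    have hLJ : ∀ j, j ∉ L → j ∈ J := fun j hj => not_not.mp fun h => hj (Or.inl h)
    have hτinj : Function.Injective (τ L) := by
      intro i j h
      by_cases hi : i ∈ L <;> by_cases hj : j ∈ L
      · rw [hτmem _ _ hi, hτmem _ _ hj] at h
        exact Sum.inr_injective h
      · rw [hτmem _ _ hi, hτnot _ _ hj] at h
        cases h
      · rw [hτnot _ _ hi, hτmem _ _ hj] at h
        cases h
      · rw [hτnot _ _ hi, hτnot _ _ hj] at h
        exact hσinj i (hLJ i hi) j (hLJ j hj) (Sum.inl_injective h)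
    have hZC : glue q L p.1 p.2 ∈ C := by
      refine (hPgen _ (glue_injective h1' (fun i _ j _ h => h2' h) hqinj h4
        (fun i _ j => h5 i j) ?_) (glue_mem hp1 hp2 hqP)).2
      rintro i j (hj | hj)
      · exact h3 i j (hJc i j hj)
      · exact hKne j hj i
    have hZ : glue q L p.1 p.2 ∘ τ L = p.2 := by
      funext j
      by_cases hj : j ∈ L
      · simp [hτmem _ _ hj, glue_inr_mem _ _ _ hj]
      · have hjJ := hLJ j hj
        have hne : ¬ ∀ i, p.1 i ≠ p.2 j := fun h => hj (Or.inr (hK.le ⟨hjJ, h⟩))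
        push Not at hne
        obtain ⟨i, hi⟩ := hne
        have : X i = X (σ j) := by
          rw [hσ j hjJ]
          exact by_contra fun hne => h3 i j hne hi
        simp [hτnot _ _ hj, glue_inl, ← hX this, hi]
    have hZU : glue q L p.1 p.2 ∈ U (τ L) := by
      refine (hCU _ hZC _).mp ?_
      rw [hZ]
      exact hpE
    obtain ⟨N, hNo, hmem, hN⟩ := shift_movable hsymm htrans hC hUo hCU hτinj (J := K)
      (fun j hj i => by rw [hτmem _ _ (Or.inr hj)]; simp) hZU
    rw [hZ] at hmem
    exact h7 (subset_closure ⟨N, hNo, hmem, hN⟩)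

/-! ### Openness of the set of ordered tuples -/

theorem splitLevel_eq {x y : Cantor} {k : ℕ} (h : ∀ m < k, x m = y m) (hk : x k ≠ y k) :
    splitLevel x y = k := by
  have hne : x ≠ y := fun hxy => hk (congrFun hxy k)
  rw [splitLevel, dif_neg hne, Nat.find_eq_iff]
  exact ⟨hk, fun m hm => not_not.mpr (h m hm)⟩

theorem splitLevel_spec {x y : Cantor} (hne : x ≠ y) :
    (∀ m < splitLevel x y, x m = y m) ∧ x (splitLevel x y) ≠ y (splitLevel x y) := by
  rw [splitLevel, dif_neg hne]
  exact ⟨fun m hm => not_not.mp (Nat.find_min (Function.ne_iff.mp hne) hm),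
    Nat.find_spec (Function.ne_iff.mp hne)⟩

theorem eventually_splitLevel {x y : Cantor} (hne : x ≠ y) :
    ∀ᶠ p in 𝓝 (x, y), splitLevel p.1 p.2 = splitLevel x y ∧ p.1 ≠ p.2 ∧
      p.1 (splitLevel x y) = x (splitLevel x y) := by
  obtain ⟨h1, h2⟩ := splitLevel_spec hne
  have hx : ∀ m, ∀ᶠ p in 𝓝 (x, y), p.1 m = x m := fun m =>
    (((continuous_apply m).comp continuous_fst).tendsto (x, y)).eventually
      ((isOpen_discrete {x m}).mem_nhds rfl)
  have hy : ∀ m, ∀ᶠ p in 𝓝 (x, y), p.2 m = y m := fun m =>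
    (((continuous_apply m).comp continuous_snd).tendsto (x, y)).eventually
      ((isOpen_discrete {y m}).mem_nhds rfl)
  have hall : ∀ᶠ p in 𝓝 (x, y), ∀ m ∈ Iic (splitLevel x y), p.1 m = x m ∧ p.2 m = y m :=
    (eventually_all_finite (finite_Iic _)).mpr fun m _ => (hx m).and (hy m)
  filter_upwards [hall] with p hp
  obtain ⟨e1, e2⟩ := hp _ (mem_Iic.mpr le_rfl)
  have hk : p.1 (splitLevel x y) ≠ p.2 (splitLevel x y) := by rwa [e1, e2]
  refine ⟨splitLevel_eq (fun m hm => ?_) hk, fun h => hk (by rw [h]), e1⟩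
  obtain ⟨f1, f2⟩ := hp m (mem_Iic.mpr hm.le)
  rw [f1, f2, h1 m hm]

theorem isOpen_ordTuples (n : ℕ) (prec : Fin (n - 1) → Fin (n - 1) → Prop) :
    IsOpen (OrdTuples n prec univ) := by
  rw [isOpen_iff_mem_nhds]
  rintro X ⟨⟨-, hX⟩, hgap⟩
  have h : ∀ i j : Fin n, i < j → ∀ᶠ X' in 𝓝 X, clex (X' i) (X' j) ∧
      cdist (X' i) (X' j) = cdist (X i) (X j) := by
    intro i j hij
    obtain ⟨hne, hlt⟩ := hX i j hij
    have hc : Continuous fun X' : Fin n → Cantor => (X' i, X' j) :=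
      (continuous_apply i).prodMk (continuous_apply j)
    filter_upwards [(hc.tendsto X).eventually (eventually_splitLevel hne)] with X' hX'
    obtain ⟨h1, h2, h3⟩ := hX'
    exact ⟨⟨h2, by rw [h1, h3, hlt]⟩, by simp only [cdist, h1]⟩
  have hall : ∀ᶠ X' in 𝓝 X, ∀ i j : Fin n, i < j → clex (X' i) (X' j) ∧
      cdist (X' i) (X' j) = cdist (X i) (X j) :=
    eventually_all.mpr fun i => eventually_all.mpr fun j => eventually_imp_distrib_left.mpr (h i j)
  filter_upwards [hall] with X' hX'
  refine ⟨⟨fun _ => mem_univ _, fun i j hij => (hX' i j hij).1⟩, fun i j hij => ?_⟩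
  have hg : ∀ i : Fin (n - 1), gapIdx i < gapIdx' i := fun i => Nat.lt_succ_self i.1
  rw [(hX' _ _ (hg i)).2, (hX' _ _ (hg j)).2]
  exact hgap i j hij

/-! ### Smoothness of closed equivalence relations -/

/-- A relatively closed equivalence relation on a locally closed subset `Q ∩ O` of a compact set
`Q` is smooth: a point is coded by the basic sets `B` with `closure B ⊆ O` whose saturation
contains it, and these saturations are closed, being projections along compact sets. -/
theorem smooth_of_closed {T : Type*} [TopologicalSpace T] [SecondCountableTopology T]
    [RegularSpace T] [Nonempty T] [MeasurableSpace T] [OpensMeasurableSpace T]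
    {Q O S : Set T} (hQ : IsCompact Q) (hO : IsOpen O) (hS : ∀ x, x ∈ S ↔ x ∈ Q ∧ x ∈ O)
    {E : Set (T × T)} (hrefl : ∀ x ∈ S, (x, x) ∈ E)
    (hsymm : ∀ x y, (x, y) ∈ E → (y, x) ∈ E)
    (htrans : ∀ x y z, (x, y) ∈ E → (y, z) ∈ E → (x, z) ∈ E)
    (hcl : ∀ x ∈ S, ∀ y ∈ S, (x, y) ∉ E → ∀ᶠ p in 𝓝 (x, y), p.1 ∈ S → p.2 ∈ S → p ∉ E) :
    ∃ c : S → Cantor, Measurable c ∧ ∀ x y : S, ((x : T), (y : T)) ∈ E ↔ c x = c y := by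
  classical
  have hbasis := TopologicalSpace.isBasis_countableBasis T
  obtain ⟨b, hb⟩ := (TopologicalSpace.countable_countableBasis T).exists_eq_range (by
    obtain ⟨B, hB, -⟩ := hbasis.exists_subset_of_mem_open (mem_univ (Classical.arbitrary T))
      isOpen_univ
    exact ⟨B, hB⟩)
  let F : ℕ → Set S := fun m => {y | closure (b m) ⊆ O ∧ ∃ x ∈ Q ∩ closure (b m), (x, ↑y) ∈ E}
  have hF : ∀ m, IsClosed (F m) := by
    intro m
    by_cases hm : closure (b m) ⊆ O
    · have hK : IsCompact (Q ∩ closure (b m)) := hQ.inter_right isClosed_closure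
      have := isCompact_iff_compactSpace.mp hK
      have hR : IsClosed {p : ↥(Q ∩ closure (b m)) × S | ((p.1 : T), (p.2 : T)) ∈ E} := by
        rw [← isOpen_compl_iff, isOpen_iff_mem_nhds]
        rintro ⟨x, y⟩ hxy
        have hmem : ∀ x : ↥(Q ∩ closure (b m)), (x : T) ∈ S :=
          fun x => (hS _).mpr ⟨x.2.1, hm x.2.2⟩
        have hc : Continuous fun p : ↥(Q ∩ closure (b m)) × S => ((p.1 : T), (p.2 : T)) :=
          (continuous_subtype_val.comp continuous_fst).prodMk
            (continuous_subtype_val.comp continuous_snd)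
        filter_upwards [(hc.tendsto (x, y)).eventually (hcl x (hmem x) y y.2 hxy)] with p hp
        exact hp (hmem p.1) p.2.2
      convert isClosedMap_snd_of_compactSpace _ hR using 1
      ext y
      simp [F, hm]
    · have : F m = ∅ := by
        ext y
        simp [F, hm]
      rw [this]
      exact isClosed_empty
  refine ⟨fun y m => decide (y ∈ F m), ?_, ?_⟩
  · refine measurable_pi_iff.mpr fun m => measurable_to_bool ?_
    convert (hF m).measurableSet using 1
    ext y
    simp
  · intro x y
    constructor
    · intro h
      funext m
      refine decide_eq_decide.mpr (and_congr_right fun _ => ?_)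
      exact ⟨fun ⟨z, hz, hzE⟩ => ⟨z, hz, htrans _ _ _ hzE h⟩,
        fun ⟨z, hz, hzE⟩ => ⟨z, hz, htrans _ _ _ hzE (hsymm _ _ h)⟩⟩
    · intro h
      by_contra hxy
      have hev : ∀ᶠ z in 𝓝 (x : T), z ∈ S → (z, (y : T)) ∉ E := by
        have ht : Tendsto (fun z : T => (z, (y : T))) (𝓝 (x : T)) (𝓝 ((x : T), (y : T))) :=
          (Continuous.prodMk_left (y : T)).tendsto _
        filter_upwards [ht.eventually (hcl x x.2 y y.2 hxy)] with z hz hzS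
        exact hz hzS y.2
      obtain ⟨hxQ, hxO⟩ := (hS _).mp x.2
      obtain ⟨B, hB, hxB, hBsub⟩ :=
        hbasis.exists_closure_subset (inter_mem hev (hO.mem_nhds hxO))
      rw [hb] at hB
      obtain ⟨m, rfl⟩ := hB
      have hxF : x ∈ F m :=
        ⟨fun z hz => (hBsub hz).2, x, ⟨hxQ, subset_closure hxB⟩, hrefl x x.2⟩
      obtain ⟨-, z, hz, hzE⟩ : y ∈ F m := (decide_eq_decide.mp (congrFun h m)).mp hxF
      exact (hBsub hz.2).1 ((hS z).mpr ⟨hz.1, (hBsub hz.2).2⟩) hzE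

theorem injective_of_mem_ordTuples {n : ℕ} {prec : Fin (n - 1) → Fin (n - 1) → Prop}
    {T : Set Cantor} {X : Fin n → Cantor} (hX : X ∈ OrdTuples n prec T) :
    Function.Injective X := by
  intro i j h
  by_contra hne
  rcases lt_or_gt_of_ne hne with hlt | hlt
  · exact (hX.1.2 i j hlt).1 h
  · exact (hX.1.2 j i hlt).1 h.symm

/-- Every Borel equivalence relation `E` on `[2^ω]^n_⪯` is smooth on `[P]^n_⪯` for some
perfect `P ⊆ 2^ω`: there is a Borel map `c : [P]^n_⪯ → 2^ω` with `X E Y ↔ c X = c Y`. -/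
theorem borel_equiv_smooth (n : ℕ) (prec : Fin (n - 1) → Fin (n - 1) → Prop)
    (hprec : IsLinearOrder (Fin (n - 1)) prec)
    (E : Set ((Fin n → Cantor) × (Fin n → Cantor))) (hE : MeasurableSet E)
    (hE_sub : E ⊆ (OrdTuples n prec Set.univ) ×ˢ (OrdTuples n prec Set.univ))
    (hrefl : ∀ X ∈ OrdTuples n prec Set.univ, (X, X) ∈ E)
    (hsymm : ∀ X Y, (X, Y) ∈ E → (Y, X) ∈ E)
    (htrans : ∀ X Y Z, (X, Y) ∈ E → (Y, Z) ∈ E → (X, Z) ∈ E) :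
    ∃ P : Set Cantor, PerfectSet P ∧
      ∃ c : ↥(OrdTuples n prec P) → Cantor, Measurable c ∧
        ∀ X Y : ↥(OrdTuples n prec P),
          (((X : Fin n → Cantor), (Y : Fin n → Cantor)) ∈ E ↔ c X = c Y) := by
  obtain ⟨P, hP, hPc, hcl⟩ := exists_perfect_closed hE hsymm htrans
  have hS : ∀ X, X ∈ OrdTuples n prec P ↔
      X ∈ univ.pi (fun _ : Fin n => P) ∧ X ∈ OrdTuples n prec univ := by
    intro X
    simp only [OrdTuples, Tuples, mem_ofPred_eq, mem_univ_pi, mem_univ]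
    tauto
  refine ⟨P, hP, smooth_of_closed (isCompact_univ_pi fun _ => hPc) (isOpen_ordTuples n prec) hS
    (fun X hX => hrefl X ((hS X).mp hX).2) hsymm htrans ?_⟩
  intro X hX Y hY hXY
  filter_upwards [hcl X Y (injective_of_mem_ordTuples hX) (injective_of_mem_ordTuples hY)
    hX.1.1 hY.1.1 hXY] with p hp hp1 hp2
  exact hp hp1.1.1 hp2.1.1
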